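/- Let U be an open neighborhood of (0,0) in ℝ², and suppose Λ : U → ℝ and Φ : U × [0,π] → ℝ are real-analytic functions such that for every (η,δ) ∈ U: the function x ↦ Φ(η,δ,x) satisfies T_{η,δ}Φ(η,δ,·) + Λ(η,δ)·Φ(η,δ,·) = 0 on (0,π), Φ(η,δ,0) = Φ(η,δ,π) = 0, and the normalization ∫₀^π Φ(η,δ,x) sin(x) dx = π/2; and suppose Λ(0,0) = 4 and Φ(0,0,x) = sin(x). Then there exist a constant C > 0 and a neighborhood V ⊆ U of (0,0) such that |Λ(η,δ) − 4 + 3πηδ + 16η²| ≤ C(|η|³ + |δ|³) for all (η,δ) ∈ V. -/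

import Mathlib

open Set Real

noncomputable section

/-- The operator `T_{η,δ}`, obtained from `T_{η,ε}` by the substitution
`ε = −(π/2)η(1+δ)`, with derivatives taken within `[0,π]`. -/
def Tdd (η δ : ℝ) (u : ℝ → ℝ) (x : ℝ) : ℝ :=
  derivWithin (derivWithin u (Set.Icc 0 π)) (Set.Icc 0 π) x
    - (η * (1 - (π/2) * η * (1 + δ)) / (1 - η * (1 - (π/2) * η * (1 + δ)) * x))
        * derivWithin u (Set.Icc 0 π) x
    - (3 * (1 - (π/2) * η * (1 + δ))^2 / (1 - η * (1 - (π/2) * η * (1 + δ)) * x)^2) * u x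

def resAs0 (d y k : ℝ) : ℝ :=
    (-18/1)*k^1 + (87/32)*k^3 + (-124/1)*y^1 + (189/16)*y^1*k^2 + (-189/8)*y^2*k^1 + (-249/2)*y^3
      + (-27/8)*y^3*k^2 + (27/4)*y^5 + (7/2)*d^1*k^1 + (-21/16)*d^1*k^3 + (39/4)*d^1*y^1*k^2
      + (117/4)*d^1*y^2*k^1 + (-33/16)*d^2*k^3 + (-21/4)*d^2*y^1*k^2

def resAs1 (d y k : ℝ) : ℝ :=
    (587/32)*k^2 + (-159/64)*k^4 + (121/1)*y^1*k^1 + (-165/32)*y^1*k^3 + (-4/1)*y^2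
      + (1143/32)*y^2*k^2 + (27/32)*y^2*k^4 + (1113/8)*y^3*k^1 + (27/8)*y^3*k^3 + (747/8)*y^4
      + (-27/4)*y^5*k^1 + (-27/8)*y^6 + (21/8)*d^1*k^2 + (-129/64)*d^1*k^4 + (32/1)*d^1*y^1*k^1
      + (-177/32)*d^1*y^1*k^3 + (687/16)*d^1*y^2*k^2 + (27/16)*d^1*y^2*k^4 + (231/2)*d^1*y^3*k^1
      + (81/16)*d^1*y^3*k^3 + (-27/8)*d^1*y^4*k^2 + (-81/8)*d^1*y^5*k^1 + (1/4)*d^2*k^2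
      + (-33/128)*d^2*k^4 + (-75/16)*d^2*y^1*k^3 + (-57/4)*d^2*y^2*k^2 + (-27/64)*d^2*y^2*k^4
      + (27/32)*d^2*y^4*k^2

def resAs2 (d y k : ℝ) : ℝ :=
    (-373/32)*k^3 + (129/128)*k^5 + (-71/1)*y^1*k^2 + (87/32)*y^1*k^4 + (64/1)*y^2*k^1
      + (-381/32)*y^2*k^3 + (-27/64)*y^2*k^5 + (336/1)*y^3 + (-255/4)*y^3*k^2 + (-27/16)*y^3*k^4
      + (-747/8)*y^4*k^1 + (-27/32)*y^4*k^3 + (-36/1)*y^5 + (27/8)*y^5*k^2 + (27/8)*y^6*k^1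
      + (-283/32)*d^1*k^3 + (75/64)*d^1*k^5 + (-83/1)*d^1*y^1*k^2 + (33/16)*d^1*y^1*k^4
      + (-140/1)*d^1*y^2*k^1 + (-741/16)*d^1*y^2*k^3 + (-27/16)*d^1*y^2*k^5
      + (-1173/8)*d^1*y^3*k^2 + (-81/16)*d^1*y^3*k^4 + (-891/8)*d^1*y^4*k^1 + (81/8)*d^1*y^5*k^2
      + (27/4)*d^1*y^6*k^1 + (21/16)*d^2*k^3 + (3/64)*d^2*k^5 + (3/1)*d^2*y^1*k^2
      + (9/16)*d^2*y^1*k^4 + (-81/8)*d^2*y^2*k^3 + (-27/32)*d^2*y^2*k^5 + (-177/8)*d^2*y^3*k^2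
      + (-27/16)*d^2*y^3*k^4 + (27/16)*d^2*y^4*k^3 + (27/8)*d^2*y^5*k^2 + (-3/16)*d^3*k^5
      + (-3/4)*d^3*y^1*k^4 + (-3/4)*d^3*y^2*k^3

def resAs3 (d y k : ℝ) : ℝ :=
    (415/128)*k^4 + (-129/512)*k^6 + (29/4)*y^1*k^3 + (-3/8)*y^1*k^5 + (-269/2)*y^2*k^2
      + (-39/128)*y^2*k^4 + (27/256)*y^2*k^6 + (-372/1)*y^3*k^1 + (117/32)*y^3*k^3
      + (27/64)*y^3*k^5 + (-192/1)*y^4 + (747/32)*y^4*k^2 + (27/128)*y^4*k^4 + (36/1)*y^5*k^1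
      + (-27/32)*y^5*k^3 + (18/1)*y^6 + (-27/32)*y^6*k^2 + (319/64)*d^1*k^4 + (-147/256)*d^1*k^6
      + (31/1)*d^1*y^1*k^3 + (3/32)*d^1*y^1*k^5 + (-26/1)*d^1*y^2*k^2 + (1383/64)*d^1*y^2*k^4
      + (81/128)*d^1*y^2*k^6 + (-144/1)*d^1*y^3*k^1 + (1197/16)*d^1*y^3*k^3 + (81/32)*d^1*y^3*k^5
      + (1323/16)*d^1*y^4*k^2 + (81/64)*d^1*y^4*k^4 + (18/1)*d^1*y^5*k^1 + (-81/16)*d^1*y^5*k^3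
      + (-81/16)*d^1*y^6*k^2 + (175/128)*d^2*k^4 + (-237/512)*d^2*k^6 + (53/4)*d^2*y^1*k^3
      + (-21/32)*d^2*y^1*k^5 + (23/1)*d^2*y^2*k^2 + (2157/128)*d^2*y^2*k^4 + (135/256)*d^2*y^2*k^6
      + (1917/32)*d^2*y^3*k^3 + (135/64)*d^2*y^3*k^5 + (1755/32)*d^2*y^4*k^2
      + (135/128)*d^2*y^4*k^4 + (-135/32)*d^2*y^5*k^3 + (-135/32)*d^2*y^6*k^2 + (-9/64)*d^3*k^6
      + (-9/8)*d^3*y^1*k^5 + (-45/16)*d^3*y^2*k^4 + (-9/4)*d^3*y^3*k^3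

def resAs4 (d y k : ℝ) : ℝ :=
    (-3/8)*k^5 + (9/2)*y^1*k^4 + (141/2)*y^2*k^3 + (9/4)*y^2*k^5 + (216/1)*y^3*k^2 + (9/1)*y^3*k^4
      + (192/1)*y^4*k^1 + (9/2)*y^4*k^3 + (-18/1)*y^5*k^2 + (-18/1)*y^6*k^1 + (-9/8)*d^1*k^5
      + (-9/512)*d^1*k^7 + (-3/2)*d^1*y^1*k^4 + (-63/128)*d^1*y^1*k^6 + (111/2)*d^1*y^2*k^3
      + (-225/128)*d^1*y^2*k^5 + (-27/256)*d^1*y^2*k^7 + (204/1)*d^1*y^3*k^2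
      + (-27/16)*d^1*y^3*k^4 + (-27/64)*d^1*y^3*k^6 + (192/1)*d^1*y^4*k^1 + (-9/2)*d^1*y^4*k^3
      + (-27/128)*d^1*y^4*k^5 + (-18/1)*d^1*y^5*k^2 + (27/32)*d^1*y^5*k^4 + (-18/1)*d^1*y^6*k^1
      + (27/32)*d^1*y^6*k^3 + (-3/4)*d^2*k^5 + (-9/256)*d^2*k^7 + (-6/1)*d^2*y^1*k^4
      + (-63/64)*d^2*y^1*k^6 + (-15/1)*d^2*y^2*k^3 + (-513/64)*d^2*y^2*k^5 + (-27/128)*d^2*y^2*k^7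
      + (-12/1)*d^2*y^3*k^2 + (-171/8)*d^2*y^3*k^4 + (-27/32)*d^2*y^3*k^6 + (-18/1)*d^2*y^4*k^3
      + (-27/64)*d^2*y^4*k^5 + (27/16)*d^2*y^5*k^4 + (27/16)*d^2*y^6*k^3 + (-9/512)*d^3*k^7
      + (-63/128)*d^3*y^1*k^6 + (-513/128)*d^3*y^2*k^5 + (-27/256)*d^3*y^2*k^7
      + (-171/16)*d^3*y^3*k^4 + (-27/64)*d^3*y^3*k^6 + (-9/1)*d^3*y^4*k^3 + (-27/128)*d^3*y^4*k^5
      + (27/32)*d^3*y^5*k^4 + (27/32)*d^3*y^6*k^3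

def resAs5 (d y k : ℝ) : ℝ :=
    (-3/32)*k^6 + (-21/8)*y^1*k^5 + (-171/8)*y^2*k^4 + (-9/16)*y^2*k^6 + (-57/1)*y^3*k^3
      + (-9/4)*y^3*k^5 + (-48/1)*y^4*k^2 + (-9/8)*y^4*k^4 + (9/2)*y^5*k^3 + (9/2)*y^6*k^2
      + (-3/16)*d^1*k^6 + (-21/4)*d^1*y^1*k^5 + (-171/4)*d^1*y^2*k^4 + (-9/8)*d^1*y^2*k^6
      + (-114/1)*d^1*y^3*k^3 + (-9/2)*d^1*y^3*k^5 + (-96/1)*d^1*y^4*k^2 + (-9/4)*d^1*y^4*k^4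
      + (9/1)*d^1*y^5*k^3 + (9/1)*d^1*y^6*k^2 + (-3/32)*d^2*k^6 + (-21/8)*d^2*y^1*k^5
      + (-171/8)*d^2*y^2*k^4 + (-9/16)*d^2*y^2*k^6 + (-57/1)*d^2*y^3*k^3 + (-9/4)*d^2*y^3*k^5
      + (-48/1)*d^2*y^4*k^2 + (-9/8)*d^2*y^4*k^4 + (9/2)*d^2*y^5*k^3 + (9/2)*d^2*y^6*k^2

def resAs (e d y k : ℝ) : ℝ :=
  e^0 * resAs0 d y k + e^1 * resAs1 d y k + e^2 * resAs2 d y k + e^3 * resAs3 d y k + e^4 * resAs4 d y k + e^5 * resAs5 d y k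

def resAc0 (d y k : ℝ) : ℝ :=
    (-345/32)*k^2 + (9/16)*k^4 + (-9/4)*y^1*k^1 + (-27/16)*y^1*k^3 + (51/1)*y^2
      + (-297/16)*y^2*k^2 + (27/4)*y^3*k^1 + (495/8)*y^4 + (9/8)*d^1*k^2 + (9/8)*d^1*k^4
      + (27/8)*d^1*y^1*k^3 + (-9/2)*d^1*y^2*k^2 + (-27/2)*d^1*y^3*k^1 + (-9/32)*d^2*k^4
      + (9/8)*d^2*y^2*k^2

def resAc1 (d y k : ℝ) : ℝ :=
    (15/2)*k^3 + (9/64)*k^5 + (-255/32)*y^1*k^2 + (81/16)*y^1*k^4 + (-255/8)*y^2*k^1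
      + (531/32)*y^2*k^3 + (36/1)*y^3 + (-171/16)*y^3*k^2 + (-261/4)*y^4*k^1 + (-279/8)*y^5
      + (165/64)*d^1*k^3 + (-9/32)*d^1*k^5 + (189/32)*d^1*y^1*k^4 + (-57/4)*d^1*y^2*k^1
      + (603/32)*d^1*y^2*k^3 + (-189/8)*d^1*y^3*k^2 + (-1107/16)*d^1*y^4*k^1 + (3/8)*d^2*k^3
      + (-99/128)*d^2*k^5 + (3/4)*d^2*y^1*k^2 + (-81/32)*d^2*y^1*k^4 + (99/32)*d^2*y^2*k^3
      + (81/8)*d^2*y^3*k^2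

def resAc2 (d y k : ℝ) : ℝ :=
    (-207/64)*k^4 + (-9/64)*k^6 + (561/32)*y^1*k^3 + (-81/32)*y^1*k^5 + (66/1)*y^2*k^2
      + (-279/32)*y^2*k^4 + (-72/1)*y^3*k^1 + (9/16)*y^3*k^3 + (-216/1)*y^4 + (567/16)*y^4*k^2
      + (279/8)*y^5*k^1 + (-363/64)*d^1*k^4 + (-27/64)*d^1*k^6 + (-453/32)*d^1*y^1*k^3
      + (-225/32)*d^1*y^1*k^5 + (195/8)*d^1*y^2*k^2 + (-585/32)*d^1*y^2*k^4 + (60/1)*d^1*y^3*k^1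
      + (207/16)*d^1*y^3*k^3 + (1251/16)*d^1*y^4*k^2 + (459/8)*d^1*y^5*k^1 + (9/16)*d^2*k^4
      + (-9/128)*d^2*k^6 + (21/16)*d^2*y^1*k^3 + (-9/4)*d^2*y^1*k^5 + (3/8)*d^2*y^2*k^2
      + (-63/16)*d^2*y^2*k^4 + (9/1)*d^2*y^3*k^3 + (135/8)*d^2*y^4*k^2

def resAc3 (d y k : ℝ) : ℝ :=
    (-237/256)*k^5 + (27/512)*k^7 + (-2919/128)*y^1*k^4 + (45/64)*y^1*k^6 + (-1725/32)*y^2*k^3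
      + (279/128)*y^2*k^5 + (63/1)*y^3*k^2 + (-27/64)*y^3*k^4 + (234/1)*y^4*k^1
      + (-585/64)*y^4*k^3 + (120/1)*y^5 + (-279/32)*y^5*k^2 + (147/128)*d^1*k^5 + (63/256)*d^1*k^7
      + (-519/64)*d^1*y^1*k^4 + (27/8)*d^1*y^1*k^6 + (-429/16)*d^1*y^2*k^3 + (639/64)*d^1*y^2*k^5
      + (36/1)*d^1*y^3*k^2 + (-99/32)*d^1*y^3*k^4 + (96/1)*d^1*y^4*k^1 + (-1377/32)*d^1*y^4*k^3
      + (-639/16)*d^1*y^5*k^2 + (243/256)*d^2*k^5 + (63/512)*d^2*k^7 + (345/128)*d^2*y^1*k^4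
      + (153/64)*d^2*y^1*k^6 + (-93/32)*d^2*y^2*k^3 + (999/128)*d^2*y^2*k^5 + (-9/1)*d^2*y^3*k^2
      + (-99/64)*d^2*y^3*k^4 + (-2097/64)*d^2*y^4*k^3 + (-999/32)*d^2*y^5*k^2 + (-9/128)*d^3*k^7
      + (-9/32)*d^3*y^1*k^6 + (9/8)*d^3*y^3*k^4 + (9/8)*d^3*y^4*k^3

def resAc4 (d y k : ℝ) : ℝ :=
    (3/4)*k^6 + (21/2)*y^1*k^5 + (30/1)*y^2*k^4 + (-12/1)*y^3*k^3 + (-132/1)*y^4*k^2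
      + (-120/1)*y^5*k^1 + (3/8)*d^1*k^6 + (-27/512)*d^1*k^8 + (9/1)*d^1*y^1*k^5
      + (-9/16)*d^1*y^1*k^7 + (30/1)*d^1*y^2*k^4 + (-45/32)*d^1*y^2*k^6 + (-6/1)*d^1*y^3*k^3
      + (27/32)*d^1*y^3*k^5 + (-126/1)*d^1*y^4*k^2 + (207/32)*d^1*y^4*k^4 + (-120/1)*d^1*y^5*k^1
      + (45/8)*d^1*y^5*k^3 + (-3/8)*d^2*k^6 + (-27/256)*d^2*k^8 + (-3/2)*d^2*y^1*k^5
      + (-9/8)*d^2*y^1*k^7 + (-45/16)*d^2*y^2*k^6 + (6/1)*d^2*y^3*k^3 + (27/16)*d^2*y^3*k^5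
      + (6/1)*d^2*y^4*k^2 + (207/16)*d^2*y^4*k^4 + (45/4)*d^2*y^5*k^3 + (-27/512)*d^3*k^8
      + (-9/16)*d^3*y^1*k^7 + (-45/32)*d^3*y^2*k^6 + (27/32)*d^3*y^3*k^5 + (207/32)*d^3*y^4*k^4
      + (45/8)*d^3*y^5*k^3

def resAc5 (d y k : ℝ) : ℝ :=
    (-9/32)*k^7 + (-3/1)*y^1*k^6 + (-15/2)*y^2*k^5 + (9/2)*y^3*k^4 + (69/2)*y^4*k^3
      + (30/1)*y^5*k^2 + (-9/16)*d^1*k^7 + (-6/1)*d^1*y^1*k^6 + (-15/1)*d^1*y^2*k^5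
      + (9/1)*d^1*y^3*k^4 + (69/1)*d^1*y^4*k^3 + (60/1)*d^1*y^5*k^2 + (-9/32)*d^2*k^7
      + (-3/1)*d^2*y^1*k^6 + (-15/2)*d^2*y^2*k^5 + (9/2)*d^2*y^3*k^4 + (69/2)*d^2*y^4*k^3
      + (30/1)*d^2*y^5*k^2

def resAc (e d y k : ℝ) : ℝ :=
  e^0 * resAc0 d y k + e^1 * resAc1 d y k + e^2 * resAc2 d y k + e^3 * resAc3 d y k + e^4 * resAc4 d y k + e^5 * resAc5 d y k

def resBs (d y k : ℝ) : ℝ :=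
    (3/1)*k^2 + (9/1)*y^1*k^1 + (-3/4)*d^1*k^2

def resBc (d y k : ℝ) : ℝ :=
    (3/2)*k^1

/-- Sine coefficient of the test function (with `y = x - π/2`, `k = π`). -/
def tA (e y k : ℝ) : ℝ := 1 + e * (3*y + 3/4*k)
  + e^2 * (-9/8*y^4 + (9/16*k^2+63/8)*y^2 + 9/4*(y+k/2)*y - 3/4*k*(y+k/2) + 15/8*(y+k/2)^2)
def tA1 (e y k : ℝ) : ℝ := e * 3
  + e^2 * (-9/2*y^3 + (9/8*k^2+63/4)*y + 9/4*(2*y+k/2) - 3/4*k + 15/4*(y+k/2))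
def tA2 (e y k : ℝ) : ℝ := e^2 * (-27/2*y^2 + (9/8*k^2+63/4) + 9/2 + 15/4)
/-- Cosine coefficient of the test function. -/
def tB (e y k : ℝ) : ℝ := e * (3/2*(k^2/4-y^2))
  + e^2 * (21/4*(y*k^2/4-y^3) + 9/4*(y+k/2)*(k^2/4-y^2))
def tB1 (e y k : ℝ) : ℝ := e * (-3*y)
  + e^2 * (21/4*(k^2/4-3*y^2) + 9/4*(k^2/4-y^2) - 9/2*(y+k/2)*y)
def tB2 (e y k : ℝ) : ℝ := e * (-3) + e^2 * (-63/2*y - 9/2*y - 9/2*(2*y+k/2))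

lemma hasDerivAt_tA (e x k : ℝ) : HasDerivAt (fun x => tA e (x-k/2) k) (tA1 e (x-k/2) k) x := by
  unfold tA tA1
  have hy : HasDerivAt (fun x : ℝ => x - k/2) 1 x := (hasDerivAt_id x).sub_const _
  have h := (((hy.const_mul 3).add_const (3/4*k)).const_mul e).const_add 1 |>.add
    ((((((hy.pow 4).const_mul (-9/8)).add ((hy.pow 2).const_mul (9/16*k^2+63/8))).add
      (((hy.add_const (k/2)).const_mul (9/4)).mul hy)).sub
      ((hy.add_const (k/2)).const_mul (3/4*k))).add
      (((hy.add_const (k/2)).pow 2).const_mul (15/8)) |>.const_mul (e^2))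
  refine h.congr_deriv ?_
  push_cast
  ring

lemma hasDerivAt_tA1 (e x k : ℝ) : HasDerivAt (fun x => tA1 e (x-k/2) k) (tA2 e (x-k/2) k) x := by
  unfold tA1 tA2
  have hy : HasDerivAt (fun x : ℝ => x - k/2) 1 x := (hasDerivAt_id x).sub_const _
  have h := ((((((hy.pow 3).const_mul (-9/2)).add (hy.const_mul (9/8*k^2+63/4))).add
      (((hy.const_mul 2).add_const (k/2)).const_mul (9/4))).sub_const (3/4*k)).add
      ((hy.add_const (k/2)).const_mul (15/4)) |>.const_mul (e^2)).const_add (e*3)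
  refine h.congr_deriv ?_
  push_cast
  ring

lemma hasDerivAt_tB (e x k : ℝ) : HasDerivAt (fun x => tB e (x-k/2) k) (tB1 e (x-k/2) k) x := by
  unfold tB tB1
  have hy : HasDerivAt (fun x : ℝ => x - k/2) 1 x := (hasDerivAt_id x).sub_const _
  have h := ((((hy.pow 2).const_sub (k^2/4)).const_mul (3/2)).const_mul e).add
    (((((hy.mul_const (k^2)).div_const 4).sub (hy.pow 3)).const_mul (21/4)).add
      (((hy.add_const (k/2)).const_mul (9/4)).mul ((hy.pow 2).const_sub (k^2/4)))
        |>.const_mul (e^2))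
  refine h.congr_deriv ?_
  simp only [Pi.pow_apply]
  push_cast
  ring

lemma hasDerivAt_tB1 (e x k : ℝ) : HasDerivAt (fun x => tB1 e (x-k/2) k) (tB2 e (x-k/2) k) x := by
  unfold tB1 tB2
  have hy : HasDerivAt (fun x : ℝ => x - k/2) 1 x := (hasDerivAt_id x).sub_const _
  have h := ((hy.const_mul (-3)).const_mul e).add
    ((((((hy.pow 2).const_mul 3).const_sub (k^2/4)).const_mul (21/4)).add
      (((hy.pow 2).const_sub (k^2/4)).const_mul (9/4))).sub
      (((hy.add_const (k/2)).const_mul (9/2)).mul hy) |>.const_mul (e^2))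
  refine h.congr_deriv ?_
  push_cast
  ring

/-- The test function and its first two derivatives. -/
def th (e x : ℝ) : ℝ := tA e (x-π/2) π * sin x + tB e (x-π/2) π * cos x
def th1 (e x : ℝ) : ℝ :=
  (tA1 e (x-π/2) π - tB e (x-π/2) π) * sin x + (tA e (x-π/2) π + tB1 e (x-π/2) π) * cos x
def th2 (e x : ℝ) : ℝ :=
  (tA2 e (x-π/2) π - tB1 e (x-π/2) π - (tA e (x-π/2) π + tB1 e (x-π/2) π)) * sin x
  + (tA1 e (x-π/2) π - tB e (x-π/2) π + (tA1 e (x-π/2) π + tB2 e (x-π/2) π)) * cos x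

lemma hasDerivAt_th (e x : ℝ) : HasDerivAt (th e) (th1 e x) x := by
  have h := ((hasDerivAt_tA e x π).mul (hasDerivAt_sin x)).add
    ((hasDerivAt_tB e x π).mul (hasDerivAt_cos x))
  refine h.congr_deriv ?_
  unfold th1; ring

lemma hasDerivAt_th1 (e x : ℝ) : HasDerivAt (th1 e) (th2 e x) x := by
  have h := (((hasDerivAt_tA1 e x π).sub (hasDerivAt_tB e x π)).mul (hasDerivAt_sin x)).add
    (((hasDerivAt_tA e x π).add (hasDerivAt_tB1 e x π)).mul (hasDerivAt_cos x))
  refine h.congr_deriv ?_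
  unfold th2; simp only [Pi.sub_apply, Pi.add_apply]; ring

lemma th_zero (e : ℝ) : th e 0 = 0 := by
  simp [th, tB]
  ring

lemma th_pi (e : ℝ) : th e π = 0 := by
  simp [th, tB]
  ring

def sS (e d : ℝ) : ℝ := 1 - (π/2) * e * (1 + d)
def wW (e d x : ℝ) : ℝ := 1 - e * sS e d * x

/-- The formal adjoint (of `w² (T + L)`) applied to the test function. -/
def adj (e d L x : ℝ) : ℝ :=
  wW e d x ^ 2 * th2 e x - 3 * (e * sS e d) * wW e d x * th1 e x
    + ((e * sS e d)^2 - 3 * sS e d ^ 2 + L * wW e d x ^ 2) * th e x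

def RA (e d x : ℝ) : ℝ := resAs e d (x-π/2) π * sin x + resAc e d (x-π/2) π * cos x
def RB (e d x : ℝ) : ℝ := resBs d (x-π/2) π * sin x + resBc d (x-π/2) π * cos x

lemma res_sin (e d y k : ℝ) :
    (1 - e * (1 - (k/2) * e * (1 + d)) * (y+k/2)) ^ 2 *
      (tA2 e y k - tB1 e y k - (tA e y k + tB1 e y k))
    - 3 * (e * (1 - (k/2) * e * (1 + d))) * (1 - e * (1 - (k/2) * e * (1 + d)) * (y+k/2)) *
      (tA1 e y k - tB e y k)
    + ((e * (1 - (k/2) * e * (1 + d)))^2 - 3 * (1 - (k/2) * e * (1 + d)) ^ 2 +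
      (4 - 3 * k * e * d - 16 * e^2) * (1 - e * (1 - (k/2) * e * (1 + d)) * (y+k/2)) ^ 2)
      * tA e y k = e^2 * (e * resAs e d y k + d * resBs d y k) := by
  unfold tA2 tA1 tA tB1 tB resAs resBs resAs0 resAs1 resAs2 resAs3 resAs4 resAs5; ring

lemma res_cos (e d y k : ℝ) :
    (1 - e * (1 - (k/2) * e * (1 + d)) * (y+k/2)) ^ 2 *
      (tA1 e y k - tB e y k + (tA1 e y k + tB2 e y k))
    - 3 * (e * (1 - (k/2) * e * (1 + d))) * (1 - e * (1 - (k/2) * e * (1 + d)) * (y+k/2)) *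
      (tA e y k + tB1 e y k)
    + ((e * (1 - (k/2) * e * (1 + d)))^2 - 3 * (1 - (k/2) * e * (1 + d)) ^ 2 +
      (4 - 3 * k * e * d - 16 * e^2) * (1 - e * (1 - (k/2) * e * (1 + d)) * (y+k/2)) ^ 2)
      * tB e y k = e^2 * (e * resAc e d y k + d * resBc d y k) := by
  unfold tA1 tA tB1 tB tB2 resAc resBc resAc0 resAc1 resAc2 resAc3 resAc4 resAc5; ring

lemma adj_eq (e d x : ℝ) :
    adj e d (4 - 3 * π * e * d - 16 * e^2) x = e^2 * (e * RA e d x + d * RB e d x) := by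
  have h1 := res_sin e d (x-π/2) π
  have h2 := res_cos e d (x-π/2) π
  have hx : x - π/2 + π/2 = x := by ring
  rw [hx] at h1 h2
  unfold adj RA RB th th1 th2 wW sS
  linear_combination sin x * h1 + cos x * h2

/-- `w² h - sin = e * G`. -/
def GG (e d x : ℝ) : ℝ :=
  - sS e d * x * (2 - e * sS e d * x) * th e x
  + ((3*(x-π/2) + 3/4*π) + e * (-9/8*(x-π/2)^4 + (9/16*π^2+63/8)*(x-π/2)^2
      + 9/4*x*(x-π/2) - 3/4*π*x + 15/8*x^2)) * sin x
  + ((3/2*(π^2/4-(x-π/2)^2)) + e * (21/4*((x-π/2)*π^2/4-(x-π/2)^3)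
      + 9/4*x*(π^2/4-(x-π/2)^2))) * cos x

lemma GG_eq (e d x : ℝ) : wW e d x ^ 2 * th e x = sin x + e * GG e d x := by
  unfold GG wW th tA tB
  ring

lemma cont_th : Continuous (fun q : ℝ × ℝ => th q.1 q.2) := by
  unfold th tA tB; fun_prop

lemma cont_RA : Continuous (fun q : (ℝ × ℝ) × ℝ => RA q.1.1 q.1.2 q.2) := by
  unfold RA resAs resAc resAs0 resAs1 resAs2 resAs3 resAs4 resAs5 resAc0 resAc1 resAc2 resAc3 resAc4 resAc5
  fun_prop

lemma cont_RB : Continuous (fun q : (ℝ × ℝ) × ℝ => RB q.1.1 q.1.2 q.2) := by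
  unfold RB resBs resBc; fun_prop

lemma cont_GG : Continuous (fun q : (ℝ × ℝ) × ℝ => GG q.1.1 q.1.2 q.2) := by
  unfold GG sS th tA tB; fun_prop

lemma cont_adj (e d L : ℝ) : Continuous (adj e d L) := by
  unfold adj wW th th1 th2 tA tA1 tA2 tB tB1 tB2; fun_prop

attribute [irreducible] RA RB GG adj

/-- Green identity. -/
lemma green (e d L : ℝ) (u : ℝ → ℝ) (hu : AnalyticOnNhd ℝ u (Icc 0 π))
    (hw : ∀ x ∈ Ioo (0:ℝ) π, wW e d x ≠ 0)
    (heq : ∀ x ∈ Ioo (0:ℝ) π, Tdd e d u x + L * u x = 0)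
    (h0 : u 0 = 0) (hpi : u π = 0) :
    ∫ x in (0:ℝ)..π, u x * adj e d L x = 0 := by
  have hu1 : AnalyticOnNhd ℝ (deriv u) (Icc 0 π) := hu.deriv
  have hcu := hu.continuousOn
  have hcu1 := hu1.continuousOn
  set m := e * sS e d with hm
  have hdw : ∀ x, HasDerivAt (wW e d) (-m) x := by
    intro x
    have := ((hasDerivAt_id x).const_mul m).const_sub 1
    refine this.congr_deriv ?_
    ring
  have hcw : Continuous (wW e d) := by unfold wW; fun_prop
  have hch : Continuous (th e) := by unfold th tA tB; fun_prop
  have hch1 : Continuous (th1 e) := by unfold th1 tA tA1 tB tB1; fun_prop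
  let B : ℝ → ℝ := fun x => wW e d x ^ 2 * th e x * deriv u x
    - (wW e d x ^ 2 * th1 e x - 2 * m * wW e d x * th e x) * u x - m * wW e d x * th e x * u x
  have key : ∫ x in (0:ℝ)..π, -(u x * adj e d L x) = B π - B 0 := by
    apply intervalIntegral.integral_eq_sub_of_hasDerivAt_of_le pi_pos.le
    · simp only [B]
      fun_prop
    · intro x hx
      have hxI := Ioo_subset_Icc_self hx
      have hd1 : HasDerivAt u (deriv u x) x := (hu x hxI).differentiableAt.hasDerivAt
      have hd2 : HasDerivAt (deriv u) (deriv (deriv u) x) x :=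
        (hu1 x hxI).differentiableAt.hasDerivAt
      have hnh : Icc (0:ℝ) π ∈ nhds x := Icc_mem_nhds hx.1 hx.2
      have e1 : derivWithin u (Icc 0 π) x = deriv u x := derivWithin_of_mem_nhds hnh
      have e2 : derivWithin (derivWithin u (Icc 0 π)) (Icc 0 π) x = deriv (deriv u) x := by
        rw [derivWithin_of_mem_nhds hnh]
        apply Filter.EventuallyEq.deriv_eq
        filter_upwards [Ioo_mem_nhds hx.1 hx.2] with z hz
        exact derivWithin_of_mem_nhds (Icc_mem_nhds hz.1 hz.2)
      have hE := heq x hx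
      unfold Tdd at hE
      rw [e1, e2] at hE
      have hwx := hw x hx
      have hE2 : wW e d x ^ 2 * deriv (deriv u) x - m * wW e d x * deriv u x
          - 3 * sS e d ^ 2 * u x + L * wW e d x ^ 2 * u x = 0 := by
        have : wW e d x ^ 2 * (deriv (deriv u) x - m / wW e d x * deriv u x
          - 3 * sS e d ^ 2 / wW e d x ^ 2 * u x + L * u x) = 0 := by
          rw [show deriv (deriv u) x - m / wW e d x * deriv u x
            - 3 * sS e d ^ 2 / wW e d x ^ 2 * u x + L * u x = 0 from hE, mul_zero]
        rw [← this]
        field_simp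
      have hB := (((((hdw x).pow 2).mul (hasDerivAt_th e x)).mul hd2).sub
        (((((hdw x).pow 2).mul (hasDerivAt_th1 e x)).sub
          (((hdw x).const_mul (2*m)).mul (hasDerivAt_th e x))).mul hd1)).sub
        ((((hdw x).const_mul m).mul (hasDerivAt_th e x)).mul hd1)
      refine hB.congr_deriv ?_
      simp only [Pi.mul_apply, Pi.pow_apply, Pi.sub_apply]
      unfold adj
      rw [← hm]
      push_cast
      linear_combination th e x * hE2
    · apply ContinuousOn.intervalIntegrable
      rw [uIcc_of_le pi_pos.le]
      exact (hcu.mul (cont_adj e d L).continuousOn).neg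
  have hB0 : B 0 = 0 := by simp [B, th_zero, h0]
  have hBp : B π = 0 := by simp [B, th_pi, hpi]
  rw [intervalIntegral.integral_neg, hB0, hBp] at key
  linarith

/-- A uniform bound for integrals of a jointly continuous function. -/
lemma unif_bound (K : Set (ℝ × ℝ)) (hK : IsCompact K) (F : (ℝ × ℝ) × ℝ → ℝ)
    (hF : ContinuousOn F (K ×ˢ Icc 0 π)) :
    ∃ N > (0:ℝ), ∀ p ∈ K, |∫ x in (0:ℝ)..π, F (p, x)| ≤ N * π := by
  obtain ⟨N, hN⟩ := (hK.prod isCompact_Icc).exists_bound_of_continuousOn hF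
  refine ⟨max N 1, by positivity, fun p hp => ?_⟩
  have := intervalIntegral.norm_integral_le_of_norm_le_const (a := 0) (b := π)
    (f := fun x => F (p, x)) (C := max N 1) (by
      intro x hx
      rw [uIoc_of_le pi_pos.le] at hx
      exact (hN (p, x) ⟨hp, hx.1.le, hx.2⟩).trans (le_max_left _ _))
  simpa [abs_of_pos pi_pos] using this

lemma wW_ne (e d x : ℝ) (he : |e| ≤ 1/100) (hd : |d| ≤ 1/100) (hx : x ∈ Ioo (0:ℝ) π) :
    wW e d x ≠ 0 := by
  have hpi := pi_lt_four
  have hs : |sS e d| ≤ 2 := by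
    have h1 : |(π/2) * e * (1 + d)| ≤ 2 * (1/100) * 2 := by
      rw [abs_mul, abs_mul, abs_of_pos (by positivity : (0:ℝ) < π/2)]
      have : |1 + d| ≤ 2 := by
        have := abs_le.1 hd
        exact abs_le.2 ⟨by linarith, by linarith⟩
      gcongr
      linarith
    have := abs_le.1 h1
    unfold sS
    exact abs_le.2 ⟨by linarith, by linarith⟩
  have h2 : |e * sS e d * x| ≤ 1/100 * 2 * 4 := by
    rw [abs_mul, abs_mul, abs_of_pos hx.1]
    have := hx.1
    gcongr
    exact hx.2.le.trans hpi.le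
  have := abs_le.1 h2
  unfold wW
  linarith

lemma adj_split (e d L : ℝ) (x : ℝ) : adj e d L x = e^2 * (e * RA e d x + d * RB e d x)
    + (L - (4 - 3 * π * e * d - 16 * e^2)) * (sin x + e * GG e d x) := by
  rw [← adj_eq, ← GG_eq]
  unfold adj; ring

lemma cont_RA_slice (e d : ℝ) : Continuous (fun x => RA e d x) :=
  Continuous.comp (g := fun q : (ℝ × ℝ) × ℝ => RA q.1.1 q.1.2 q.2)
    (f := fun x : ℝ => (((e, d) : ℝ × ℝ), x)) cont_RA (by fun_prop)
lemma cont_RB_slice (e d : ℝ) : Continuous (fun x => RB e d x) :=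
  Continuous.comp (g := fun q : (ℝ × ℝ) × ℝ => RB q.1.1 q.1.2 q.2)
    (f := fun x : ℝ => (((e, d) : ℝ × ℝ), x)) cont_RB (by fun_prop)
lemma cont_GG_slice (e d : ℝ) : Continuous (fun x => GG e d x) :=
  Continuous.comp (g := fun q : (ℝ × ℝ) × ℝ => GG q.1.1 q.1.2 q.2)
    (f := fun x : ℝ => (((e, d) : ℝ × ℝ), x)) cont_GG (by fun_prop)

lemma final_arith (D N1 N2 a b I1 I2 E e d : ℝ) (ha : a = |e|) (hb : b = |d|)
    (hN1 : 0 < N1) (hN2 : 0 < N2)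
    (i1 : |I1| ≤ N1 * π) (i2 : |I2| ≤ N2 * π) (he3 : |E| ≤ π/4)
    (hDe : D * (π/2 + E) = -(e^3 * I1 + e^2 * d * I2)) :
    |D| ≤ 8 * (N1 + N2) * (a^3 + b^3) := by
  have hpi := pi_pos
  have ha0 : 0 ≤ a := ha ▸ abs_nonneg e
  have hb0 : 0 ≤ b := hb ▸ abs_nonneg d
  have hlow : π/4 ≤ |π/2 + E| := by
    have := abs_le.1 he3
    rw [abs_of_nonneg] <;> linarith
  have hup : |D| * |π/2 + E| ≤ a^3 * (N1 * π) + a^2 * b * (N2 * π) := by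
    rw [← abs_mul, hDe, abs_neg]
    refine (abs_add_le _ _).trans ?_
    rw [abs_mul, abs_mul, abs_mul, abs_pow, abs_pow, ← ha, ← hb]
    gcongr
  have hfin : |D| * (π/4) ≤ a^3 * (N1 * π) + a^2 * b * (N2 * π) :=
    (mul_le_mul_of_nonneg_left hlow (abs_nonneg _)).trans hup
  have hfin2 : |D| ≤ 4 * (a^3 * N1 + a^2 * b * N2) := by
    refine le_of_mul_le_mul_right ?_ (by positivity : 0 < π/4)
    linarith
  have hd3 : 0 ≤ b^3 := by positivity
  have he3n : 0 ≤ a^3 := by positivity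
  have hyoung : a^2 * b ≤ a^3 + b^3 := by
    rcases le_total a b with h | h
    · have : a^2 * b ≤ b^2 * b := by gcongr
      linarith [pow_succ b 2]
    · have : a^2 * b ≤ a^2 * a := by gcongr
      linarith [pow_succ a 2]
  have t1 : a^3 * N1 ≤ (a^3 + b^3) * N1 := by gcongr; linarith
  have t2 : a^2 * b * N2 ≤ (a^3 + b^3) * N2 := by gcongr
  have t3 : 0 ≤ (a^3 + b^3) * (N1 + N2) := by positivity
  linarith

/-- Second-order expansion of the first Dirichlet eigenvalue branch of
`T_{η,δ}`: `Λ(η,δ) = 4 − 3πηδ − 16η² + O(|η|³ + |δ|³)`. -/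
theorem first_dirichlet_branch_second_order
    (U : Set (ℝ × ℝ)) (hUopen : IsOpen U) (hU0 : (0, 0) ∈ U)
    (Λ : ℝ × ℝ → ℝ) (Φ : ℝ × ℝ → ℝ → ℝ)
    (hΛ : AnalyticOnNhd ℝ Λ U)
    (hΦ : AnalyticOnNhd ℝ (fun q : (ℝ × ℝ) × ℝ => Φ q.1 q.2) (U ×ˢ Set.Icc 0 π))
    (heq : ∀ p ∈ U, ∀ x ∈ Set.Ioo (0:ℝ) π, Tdd p.1 p.2 (Φ p) x + Λ p * Φ p x = 0)
    (hbc : ∀ p ∈ U, Φ p 0 = 0 ∧ Φ p π = 0)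
    (hnorm : ∀ p ∈ U, ∫ x in (0:ℝ)..π, Φ p x * Real.sin x = π/2)
    (hΛ0 : Λ (0, 0) = 4)
    (hΦ0 : ∀ x ∈ Set.Icc (0:ℝ) π, Φ (0, 0) x = Real.sin x) :
    ∃ C > (0:ℝ), ∃ V ⊆ U, IsOpen V ∧ (0, 0) ∈ V ∧
      ∀ p ∈ V, |Λ p - 4 + 3 * π * p.1 * p.2 + 16 * p.1^2| ≤ C * (|p.1|^3 + |p.2|^3) := by
  obtain ⟨r, hr, hrU⟩ := Metric.nhds_basis_closedBall.mem_iff.1 (hUopen.mem_nhds hU0)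
  set K := Metric.closedBall ((0, 0) : ℝ × ℝ) r with hKdef
  have hK : IsCompact K := isCompact_closedBall _ _
  have hΦc : ContinuousOn (fun q : (ℝ × ℝ) × ℝ => Φ q.1 q.2) (K ×ˢ Set.Icc 0 π) :=
    hΦ.continuousOn.mono (Set.prod_mono hrU subset_rfl)
  obtain ⟨N1, hN1, hb1⟩ := unif_bound K hK
    (fun q => Φ q.1 q.2 * RA q.1.1 q.1.2 q.2) (hΦc.mul cont_RA.continuousOn)
  obtain ⟨N2, hN2, hb2⟩ := unif_bound K hK
    (fun q => Φ q.1 q.2 * RB q.1.1 q.1.2 q.2) (hΦc.mul cont_RB.continuousOn)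
  obtain ⟨N3, hN3, hb3⟩ := unif_bound K hK
    (fun q => Φ q.1 q.2 * GG q.1.1 q.1.2 q.2) (hΦc.mul cont_GG.continuousOn)
  set ρ := min r (min (1/100) (1/(4*N3))) with hρdef
  have hρ : 0 < ρ := by positivity
  have hρr : ρ ≤ r := min_le_left _ _
  have hρ1 : ρ ≤ 1/100 := (min_le_right _ _).trans (min_le_left _ _)
  have hρ3 : ρ ≤ 1/(4*N3) := (min_le_right _ _).trans (min_le_right _ _)
  have hVK : Metric.ball ((0, 0) : ℝ × ℝ) ρ ⊆ K :=
    Metric.ball_subset_closedBall.trans (Metric.closedBall_subset_closedBall hρr)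
  refine ⟨8 * (N1 + N2), by positivity, Metric.ball (0, 0) ρ, hVK.trans hrU, Metric.isOpen_ball,
    Metric.mem_ball_self hρ, ?_⟩
  rintro ⟨e, d⟩ hp
  have hpK := hVK hp
  have hpU := hrU hpK
  have hed : |e| < ρ ∧ |d| < ρ := by
    simpa [Prod.dist_eq] using hp
  have hu : AnalyticOnNhd ℝ (Φ (e, d)) (Icc 0 π) := by
    intro x hx
    have h1 : AnalyticAt ℝ (fun q : (ℝ × ℝ) × ℝ => Φ q.1 q.2) ((e, d), x) :=
      hΦ ((e, d), x) ⟨hpU, hx⟩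
    have h2 : AnalyticAt ℝ (fun x : ℝ => (((e, d) : ℝ × ℝ), x)) x :=
      analyticAt_const.prod analyticAt_id
    exact AnalyticAt.comp (g := fun q : (ℝ × ℝ) × ℝ => Φ q.1 q.2)
      (f := fun x : ℝ => (((e, d) : ℝ × ℝ), x)) h1 h2
  have hG := green e d (Λ (e, d)) (Φ (e, d)) hu
    (fun x hx => wW_ne e d x (hed.1.le.trans hρ1) (hed.2.le.trans hρ1) hx)
    (heq (e, d) hpU) (hbc _ hpU).1 (hbc _ hpU).2
  have hn := hnorm _ hpU
  have i1 := hb1 _ hpK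
  have i2 := hb2 _ hpK
  have i3 := hb3 _ hpK
  beta_reduce at i1 i2 i3
  set D := Λ (e, d) - (4 - 3 * π * e * d - 16 * e^2) with hD
  have hcu := hu.continuousOn
  have ii : ∀ f : ℝ → ℝ, Continuous f →
      IntervalIntegrable (fun x => Φ (e, d) x * f x) MeasureTheory.volume 0 π := by
    intro f hf
    apply ContinuousOn.intervalIntegrable
    rw [uIcc_of_le pi_pos.le]
    exact hcu.mul hf.continuousOn
  have cA : Continuous (fun x => RA e d x) := cont_RA_slice e d
  have cB : Continuous (fun x => RB e d x) := cont_RB_slice e d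
  have cG : Continuous (fun x => GG e d x) := cont_GG_slice e d
  set I1 := ∫ x in (0:ℝ)..π, Φ (e, d) x * RA e d x with hI1
  set I2 := ∫ x in (0:ℝ)..π, Φ (e, d) x * RB e d x with hI2
  set I3 := ∫ x in (0:ℝ)..π, Φ (e, d) x * GG e d x with hI3
  have hid : ∀ x, Φ (e, d) x * adj e d (Λ (e, d)) x
      = e^3 * (Φ (e, d) x * RA e d x) + e^2 * d * (Φ (e, d) x * RB e d x)
        + D * (Φ (e, d) x * sin x) + D * e * (Φ (e, d) x * GG e d x) := by
    intro x
    rw [adj_split, ← hD]; ring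
  have hsum : e^3 * I1 + e^2 * d * I2 + D * (π/2) + D * e * I3 = 0 := by
    rw [← hG, ← hn, hI1, hI2, hI3]
    simp_rw [hid]
    have j1 := (ii _ cA).const_mul (e^3)
    have j2 := (ii _ cB).const_mul (e^2*d)
    have j3 := (ii _ continuous_sin).const_mul D
    have j4 := (ii _ cG).const_mul (D*e)
    rw [intervalIntegral.integral_add ((j1.add j2).add j3) j4,
      intervalIntegral.integral_add (j1.add j2) j3, intervalIntegral.integral_add j1 j2]
    simp only [intervalIntegral.integral_const_mul]
  have hpi := pi_pos
  have he3 : |e * I3| ≤ π/4 := by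
    rw [abs_mul]
    calc |e| * |I3| ≤ (1/(4*N3)) * (N3 * π) := by
          gcongr
          exact hed.1.le.trans hρ3
      _ = π/4 := by field_simp
  have hDe : D * (π/2 + e * I3) = -(e^3 * I1 + e^2 * d * I2) := by linarith
  have hgoal : Λ (e, d) - 4 + 3 * π * e * d + 16 * e^2 = D := by rw [hD]; ring
  show |Λ (e, d) - 4 + 3 * π * e * d + 16 * e^2| ≤ _
  rw [hgoal]
  exact final_arith D N1 N2 _ _ I1 I2 (e * I3) e d rfl rfl hN1 hN2 i1 i2 he3 hDe

end
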